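/- arXiv:1907.01473 — 5 statements merged into one kernel-verified Lean document; each statement's English description precedes it below -/
import Mathlib

section
/- Let g : ℝ → ℝ be a continuously differentiable 2π-periodic function having 0 as a regular value, i.e., g(t) = 0 implies g'(t) ≠ 0. Then the set {t ∈ [0, 2π) : g(t) = 0} is finite and has an even number of elements. -/
open Real Set

/-!
If `z` is a zero of `g` in `(a, b)`, then `g t = (t - z) * dslope g z t`. Passing from `g` to
`dslope g z` removes the simple zero `z`, keeps the other zeros simple, and flips the sign of the
product of the end values, since `(a - z) * (b - z) < 0`. Once no zero is left this product is
positive by the intermediate value theorem, so the number of zeros in `[a, b]` is even exactly when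
`g a` and `g b` have the same sign. For periodic `g`, the zeros may be counted on a period starting
at a point `b` with `g b ≠ 0`, and the end values `g b` and `g (b + c)` agree.
-/

open Function Topology

section Dslope

variable {𝕜 E : Type*} [NontriviallyNormedField 𝕜] [NormedAddCommGroup E] [NormedSpace 𝕜 E]
  {g : 𝕜 → E} {z : 𝕜}

lemma dslope_eq_zero_iff (hz : g z = 0) (hz' : deriv g z ≠ 0) {t : 𝕜} :
    dslope g z t = 0 ↔ g t = 0 ∧ t ≠ z := by
  rcases eq_or_ne t z with rfl | htz
  · simp [hz']
  · rw [← sub_smul_dslope_of_zero hz t, smul_eq_zero_iff_right (sub_ne_zero.2 htz),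
      and_iff_left htz]

lemma sep_dslope_eq_zero (hz : g z = 0) (hz' : deriv g z ≠ 0) (s : Set 𝕜) :
    {t ∈ s | dslope g z t = 0} = {t ∈ s | g t = 0} \ {z} := by
  ext t
  simp only [dslope_eq_zero_iff hz hz', mem_ofPred_eq, mem_sdiff, mem_singleton_iff, and_assoc]

lemma deriv_eq_sub_smul_deriv_dslope (hz : g z = 0) {t : 𝕜} (hg : DifferentiableAt 𝕜 g t)
    (htz : t ≠ z) (ht : dslope g z t = 0) : deriv g t = (t - z) • deriv (dslope g z) t := by
  have hfactor : (fun s => s - z) • dslope g z = g := funext (sub_smul_dslope_of_zero hz)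
  have hdslope := ((differentiableAt_dslope_of_ne htz).2 hg).hasDerivAt
  have hderiv := ((hasDerivAt_id' t).sub_const z).smul hdslope
  rw [hfactor, ht, smul_zero, add_zero] at hderiv
  exact hderiv.deriv

lemma deriv_dslope_ne_zero (hz : g z = 0) {s : Set 𝕜} (hzs : z ∈ s)
    (hreg : ∀ t ∈ s, g t = 0 → deriv g t ≠ 0) :
    ∀ t ∈ s, dslope g z t = 0 → deriv (dslope g z) t ≠ 0 := by
  intro t hts ht
  obtain ⟨hgt, htz⟩ := (dslope_eq_zero_iff hz (hreg z hzs hz)).1 ht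
  have hderiv := hreg t hts hgt
  rw [deriv_eq_sub_smul_deriv_dslope hz (differentiableAt_of_deriv_ne_zero hderiv) htz ht] at hderiv
  exact right_ne_zero_of_smul hderiv

lemma finite_zeros_of_isCompact {K : Set 𝕜} (hK : IsCompact K) (hg : ContinuousOn g K)
    (hreg : ∀ t ∈ K, g t = 0 → deriv g t ≠ 0) : {t ∈ K | g t = 0}.Finite := by
  have hclosed : IsClosed {t ∈ K | g t = 0} :=
    hg.preimage_isClosed_of_isClosed hK.isClosed isClosed_singleton
  have hcompact : IsCompact {t ∈ K | g t = 0} := hK.of_isClosed_subset hclosed (sep_subset _ _)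
  refine hcompact.finite (isDiscrete_iff_nhdsNE.2 fun x ⟨hxK, hx⟩ => ?_)
  have hx' : deriv g x ≠ 0 := hreg x hxK hx
  have hisolated : ∀ᶠ t in 𝓝[≠] x, g t ≠ 0 :=
    (differentiableAt_of_deriv_ne_zero hx').hasDerivAt.eventually_ne hx'
  exact Filter.inf_principal_eq_bot.2 (hisolated.mono fun t ht hmem => ht hmem.2)

end Dslope

lemma mul_pos_of_isPreconnected {X R : Type*} [TopologicalSpace X] [Ring R] [LinearOrder R]
    [IsStrictOrderedRing R] [TopologicalSpace R] [OrderClosedTopology R] {s : Set X}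
    (hs : IsPreconnected s) {f : X → R} (hf : ContinuousOn f s) (hne : ∀ x ∈ s, f x ≠ 0)
    {x y : X} (hx : x ∈ s) (hy : y ∈ s) : 0 < f x * f y := by
  by_contra! hle
  rcases mul_nonpos_iff.1 hle with ⟨hfx, hfy⟩ | ⟨hfx, hfy⟩
  · obtain ⟨t, ht, hft⟩ := hs.intermediate_value hy hx hf ⟨hfy, hfx⟩
    exact hne t ht hft
  · obtain ⟨t, ht, hft⟩ := hs.intermediate_value hx hy hf ⟨hfx, hfy⟩
    exact hne t ht hft

lemma mul_pos_iff_not_dslope_mul_pos {g : ℝ → ℝ} {a b z : ℝ} (hz : g z = 0) (hzab : z ∈ Ioo a b)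
    (ha : g a ≠ 0) (hb : g b ≠ 0) :
    0 < g a * g b ↔ ¬ 0 < dslope g z a * dslope g z b := by
  have hfactor (t : ℝ) : (t - z) * dslope g z t = g t := sub_smul_dslope_of_zero hz t
  have hneg : (a - z) * (b - z) < 0 :=
    mul_neg_of_neg_of_pos (sub_neg.2 hzab.1) (sub_pos.2 hzab.2)
  have hmul : g a * g b = (a - z) * (b - z) * (dslope g z a * dslope g z b) := by
    rw [← hfactor a, ← hfactor b]
    ring
  have hne : dslope g z a * dslope g z b ≠ 0 :=
    right_ne_zero_of_mul (hmul ▸ mul_ne_zero ha hb)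
  rw [hmul, not_lt, hne.le_iff_lt]
  exact ⟨fun h => neg_of_mul_pos_right h hneg.le, mul_pos_of_neg_of_neg hneg⟩

theorem even_ncard_zeros_Icc_iff {g : ℝ → ℝ} {a b : ℝ} (hab : a ≤ b)
    (hg : ContinuousOn g (Icc a b)) (ha : g a ≠ 0) (hb : g b ≠ 0)
    (hreg : ∀ t ∈ Icc a b, g t = 0 → deriv g t ≠ 0) :
    Even {t ∈ Icc a b | g t = 0}.ncard ↔ 0 < g a * g b := by
  induction hn : {t ∈ Icc a b | g t = 0}.ncard generalizing g with
  | zero =>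
    have hempty := (ncard_eq_zero (finite_zeros_of_isCompact isCompact_Icc hg hreg)).1 hn
    have hne : ∀ t ∈ Icc a b, g t ≠ 0 := fun t ht ht0 =>
      eq_empty_iff_forall_notMem.1 hempty t ⟨ht, ht0⟩
    exact iff_of_true Even.zero (mul_pos_of_isPreconnected isPreconnected_Icc hg hne
      (left_mem_Icc.2 hab) (right_mem_Icc.2 hab))
  | succ n ih =>
    obtain ⟨z, hzero⟩ : {t ∈ Icc a b | g t = 0}.Nonempty :=
      nonempty_of_ncard_ne_zero (hn ▸ n.succ_ne_zero)
    have ⟨hzmem, hz⟩ := hzero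
    have hz' : deriv g z ≠ 0 := hreg z hzmem hz
    have hzab : z ∈ Ioo a b :=
      ⟨hzmem.1.lt_of_ne fun h => ha (h ▸ hz), hzmem.2.lt_of_ne fun h => hb (h ▸ hz)⟩
    have hcont : ContinuousOn (dslope g z) (Icc a b) :=
      (continuousOn_dslope (Icc_mem_nhds hzab.1 hzab.2)).2
        ⟨hg, differentiableAt_of_deriv_ne_zero hz'⟩
    have hcard : {t ∈ Icc a b | dslope g z t = 0}.ncard = n := by
      rw [sep_dslope_eq_zero hz hz', ncard_sdiff_singleton_of_mem hzero, hn,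
        Nat.add_sub_cancel]
    have hdslope_ne {t : ℝ} (ht : g t ≠ 0) : dslope g z t ≠ 0 := fun h =>
      ht ((dslope_eq_zero_iff hz hz').1 h).1
    rw [Nat.even_add_one, mul_pos_iff_not_dslope_mul_pos hz hzab ha hb,
      ih hcont (hdslope_ne ha) (hdslope_ne hb) (deriv_dslope_ne_zero hz hzmem hreg) hcard]

lemma ncard_sep_Ico_eq_of_periodic {α β : Type*} [AddCommGroup α] [LinearOrder α]
    [IsOrderedAddMonoid α] [Archimedean α] {f : α → β} {c : α} (hf : Periodic f c) (hc : 0 < c)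
    (y : β) (a b : α) :
    {t ∈ Ico a (a + c) | f t = y}.ncard = {t ∈ Ico b (b + c) | f t = y}.ncard := by
  have : Fact (0 < c) := ⟨hc⟩
  have hcircle (a : α) :
      {t ∈ Ico a (a + c) | f t = y}.ncard = {x : AddCircle c | hf.lift x = y}.ncard := by
    have hinj : InjOn ((↑) : α → AddCircle c) {t ∈ Ico a (a + c) | f t = y} :=
      fun s hs t ht => (AddCircle.coe_eq_coe_iff_of_mem_Ico hs.1 ht.1).1
    have himage : ((↑) : α → AddCircle c) '' {t ∈ Ico a (a + c) | f t = y} =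
        {x : AddCircle c | hf.lift x = y} := by
      have := image_inter_preimage ((↑) : α → AddCircle c) (Ico a (a + c)) {x | hf.lift x = y}
      rwa [AddCircle.coe_image_Ico_eq, univ_inter] at this
    rw [← himage, hinj.ncard_image]
  rw [hcircle a, hcircle b]

theorem zeros_finite_and_even_general {g : ℝ → ℝ} {c : ℝ} (hc : 0 < c) (hg : Continuous g)
    (hper : Periodic g c) (hreg : ∀ t, g t = 0 → deriv g t ≠ 0) (a : ℝ) :
    {t ∈ Ico a (a + c) | g t = 0}.Finite ∧ Even {t ∈ Ico a (a + c) | g t = 0}.ncard := by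
  refine ⟨(finite_zeros_of_isCompact isCompact_Icc hg.continuousOn fun t _ => hreg t).subset
    fun t ht => ⟨Ico_subset_Icc_self ht.1, ht.2⟩, ?_⟩
  obtain ⟨b, hb⟩ : ∃ b, g b ≠ 0 := by
    by_contra! hzero
    exact hreg 0 (hzero 0) (by simp [funext hzero])
  have hbc : g (b + c) ≠ 0 := (hper b).symm ▸ hb
  have hIcc : {t ∈ Ico b (b + c) | g t = 0} = {t ∈ Icc b (b + c) | g t = 0} := by
    ext t
    exact ⟨fun ht => ⟨Ico_subset_Icc_self ht.1, ht.2⟩,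
      fun ht => ⟨⟨ht.1.1, ht.1.2.lt_of_ne fun h => hbc (h ▸ ht.2)⟩, ht.2⟩⟩
  rw [ncard_sep_Ico_eq_of_periodic hper hc 0 a b, hIcc, even_ncard_zeros_Icc_iff
    (le_add_of_nonneg_right hc.le) hg.continuousOn hb hbc fun t _ => hreg t, hper b]
  exact mul_self_pos.2 hb

/-- If `g : ℝ → ℝ` is continuously differentiable, `2π`-periodic and has `0` as a
regular value, then its zero set in `[0, 2π)` is finite with an even number of elements. -/
theorem zeros_finite_and_even (g : ℝ → ℝ) (hg : ContDiff ℝ 1 g)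
    (hper : Function.Periodic g (2 * π))
    (hreg : ∀ t, g t = 0 → deriv g t ≠ 0) :
    {t ∈ Ico (0 : ℝ) (2 * π) | g t = 0}.Finite ∧
      Even {t ∈ Ico (0 : ℝ) (2 * π) | g t = 0}.ncard := by
  simpa only [zero_add] using zeros_finite_and_even_general two_pi_pos hg.continuous hper hreg 0
end

section
/- Let g : ℝ → ℝ be a continuously differentiable 2π-periodic function having 0 as a regular value (g(t) = 0 implies g'(t) ≠ 0), and suppose g has at least one zero. Let t₁ < t₂ < ⋯ < t_m be the zeros of g in [0, 2π), and set t_{m+1} = t₁ + 2π. Then on consecutive open arcs (t_i, t_{i+1}) the function g has constant, alternating signs, and the sum over i = 1, …, m of the sign of g on the arc (t_i, t_{i+1}) equals 0. -/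
open Real Set

open scoped Topology

/-!
At each zero `t i` put `d i = sign (g' (t i)) = ±1`. On the arc `(t i, t (i+1))` the function `g`
has no zero, hence a constant sign; the first-order behaviour of `g` at the two endpoints shows
that this sign is both `d i` and `-d (i+1)`. So the signs of the arcs alternate, and twice their
sum telescopes to `d 0 - d m`, which vanishes because `g'` is periodic along with `g`.
-/

section Sign

theorem real_sign_eq_coe_sign (r : ℝ) : Real.sign r = (SignType.sign r : ℝ) := by
  rcases lt_trichotomy r 0 with h | rfl | h
  · simp [Real.sign_of_neg h, h]
  · simp
  · simp [Real.sign_of_pos h, h]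

theorem sign_eq_sign_of_isPreconnected {X α : Type*} [TopologicalSpace X] [TopologicalSpace α]
    [Zero α] [LinearOrder α] [OrderTopology α] {s : Set X} (hs : IsPreconnected s) {f : X → α}
    (hf : ContinuousOn f s) (hne : ∀ x ∈ s, f x ≠ 0) {x y : X} (hx : x ∈ s) (hy : y ∈ s) :
    SignType.sign (f x) = SignType.sign (f y) :=
  hs.constant (fun z hz ↦ (continuousAt_sign_of_ne_zero (hne z hz)).comp_continuousWithinAt
    (hf z hz)) hx hy

variable {f : ℝ → ℝ} {a b : ℝ}

theorem eventually_sign_eq_sign_deriv_mul_sign_sub (hfa : f a = 0) (hfa' : deriv f a ≠ 0) :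
    ∀ᶠ x in 𝓝 a, SignType.sign (f x) = SignType.sign (deriv f a) * SignType.sign (x - a) := by
  rcases hfa'.lt_or_gt with h | h
  · filter_upwards [eventually_nhdsWithin_sign_eq_of_deriv_neg h hfa] with x hx
    rw [hx, sign_neg h, neg_one_mul, ← Left.sign_neg, neg_sub]
  · filter_upwards [eventually_nhdsWithin_sign_eq_of_deriv_pos h hfa] with x hx
    rw [hx, sign_pos h, one_mul]

theorem sign_eq_sign_deriv_left (hf : ContinuousOn f (Ioo a b)) (hne : ∀ x ∈ Ioo a b, f x ≠ 0)
    (hfa : f a = 0) (hfa' : deriv f a ≠ 0) {s : ℝ} (hs : s ∈ Ioo a b) :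
    SignType.sign (f s) = SignType.sign (deriv f a) := by
  obtain ⟨x, hx, hxab⟩ :=
    (((eventually_sign_eq_sign_deriv_mul_sign_sub hfa hfa').filter_mono nhdsWithin_le_nhds).and
      (Ioo_mem_nhdsGT (hs.1.trans hs.2))).exists
  rw [sign_eq_sign_of_isPreconnected isPreconnected_Ioo hf hne hs hxab, hx,
    sign_pos (sub_pos.2 hxab.1), mul_one]

theorem sign_eq_neg_sign_deriv_right (hf : ContinuousOn f (Ioo a b))
    (hne : ∀ x ∈ Ioo a b, f x ≠ 0) (hfb : f b = 0) (hfb' : deriv f b ≠ 0) {s : ℝ}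
    (hs : s ∈ Ioo a b) : SignType.sign (f s) = -SignType.sign (deriv f b) := by
  obtain ⟨x, hx, hxab⟩ :=
    (((eventually_sign_eq_sign_deriv_mul_sign_sub hfb hfb').filter_mono nhdsWithin_le_nhds).and
      (Ioo_mem_nhdsLT (hs.1.trans hs.2))).exists
  rw [sign_eq_sign_of_isPreconnected isPreconnected_Ioo hf hne hs hxab, hx,
    sign_neg (sub_neg.2 hxab.2), mul_neg_one]

theorem sign_deriv_right_eq_neg_sign_deriv_left (hab : a < b) (hf : ContinuousOn f (Ioo a b))
    (hne : ∀ x ∈ Ioo a b, f x ≠ 0) (hfa : f a = 0) (hfa' : deriv f a ≠ 0) (hfb : f b = 0)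
    (hfb' : deriv f b ≠ 0) : SignType.sign (deriv f b) = -SignType.sign (deriv f a) := by
  obtain ⟨s, hs⟩ := nonempty_Ioo.2 hab
  rw [← sign_eq_sign_deriv_left hf hne hfa hfa' hs,
    sign_eq_neg_sign_deriv_right hf hne hfb hfb' hs, neg_neg]

end Sign

theorem periodic_deriv {𝕜 F : Type*} [NontriviallyNormedField 𝕜] [NormedAddCommGroup F]
    [NormedSpace 𝕜 F] {f : 𝕜 → F} {c : 𝕜} (hf : Function.Periodic f c) :
    Function.Periodic (deriv f) c := fun x ↦ by
  rw [← deriv_comp_add_const, funext hf]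

theorem two_nsmul_sum_castSucc_of_alternating {M : Type*} [AddCommGroup M] {m : ℕ}
    {d : Fin (m + 1) → M} (hd : ∀ i : Fin m, d i.succ = -d i.castSucc) :
    2 • ∑ i : Fin m, d i.castSucc = d 0 - d (Fin.last m) := by
  -- Split off the last or the first term of the sum of `d` over all indices.
  have hsplit : ∑ i : Fin m, d i.castSucc + d (Fin.last m) = d 0 - ∑ i : Fin m, d i.castSucc := by
    rw [← Fin.sum_univ_castSucc, Fin.sum_univ_succ]
    simp only [hd, Finset.sum_neg_distrib, sub_eq_add_neg]
  rw [two_nsmul, eq_sub_iff_add_eq, add_right_comm, hsplit, sub_add_cancel]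

theorem notMem_range_of_mem_Ioo_castSucc_succ {α : Type*} [Preorder α] {m : ℕ}
    {t : Fin (m + 1) → α} (ht : StrictMono t) {i : Fin m} {s : α}
    (hs : s ∈ Ioo (t i.castSucc) (t i.succ)) : s ∉ range t := by
  rintro ⟨k, rfl⟩
  exact (ht.lt_iff_lt.1 hs.2).not_ge (Fin.castSucc_lt_iff_succ_le.1 (ht.lt_iff_lt.1 hs.1))

theorem eq_zero_iff_mem_range_of_periodic {α β : Type*} [AddCommGroup α] [LinearOrder α]
    [IsOrderedAddMonoid α] [Zero β] {f : α → β} {a c : α} (hf : Function.Periodic f c) {m : ℕ}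
    (hm : 0 < m) {t : Fin (m + 1) → α} (ht : Monotone t)
    (hrange : ∀ i : Fin m, t i.castSucc ∈ Ico a (a + c)) (hlast : t (Fin.last m) = t 0 + c)
    (hzeros : ∀ s ∈ Ico a (a + c), (f s = 0 ↔ ∃ i : Fin m, s = t i.castSucc)) {s : α}
    (hs : s ∈ Icc (t 0) (t (Fin.last m))) : f s = 0 ↔ s ∈ range t := by
  have hzero (i : Fin m) : f (t i.castSucc) = 0 := (hzeros _ (hrange i)).2 ⟨i, rfl⟩
  have ht0 : t 0 ∈ Ico a (a + c) := hrange ⟨0, hm⟩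
  constructor
  · intro hfs
    rcases lt_or_ge s (a + c) with hlt | hge
    · obtain ⟨i, rfl⟩ := (hzeros s ⟨ht0.1.trans hs.1, hlt⟩).1 hfs
      exact mem_range_self _
    · -- The translate `s - c` is a zero in the period and at most `t 0`, so it equals `t 0`.
      have hle : s - c ≤ t 0 := sub_le_iff_le_add.2 (hlast ▸ hs.2)
      obtain ⟨i, hi⟩ := (hzeros (s - c) ⟨le_sub_iff_add_le.2 hge, hle.trans_lt ht0.2⟩).1
        (by rw [hf.sub_eq, hfs])
      have heq : s - c = t 0 := hle.antisymm (hi ▸ ht (Fin.zero_le _))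
      exact ⟨Fin.last m, by rw [hlast, ← heq, sub_add_cancel]⟩
  · rintro ⟨k, rfl⟩
    induction k using Fin.lastCases with
    | last =>
      rw [hlast, hf]
      exact hzero ⟨0, hm⟩
    | cast i => exact hzero i

theorem alternating_signs_sum_zero_general {g : ℝ → ℝ} (hg : Continuous g) {a c : ℝ}
    (hper : Function.Periodic g c) (hreg : ∀ t, g t = 0 → deriv g t ≠ 0) {m : ℕ} (hm : 0 < m)
    {t : Fin (m + 1) → ℝ} (hmono : StrictMono t)
    (hrange : ∀ i : Fin m, t i.castSucc ∈ Ico a (a + c)) (hlast : t (Fin.last m) = t 0 + c)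
    (hzeros : ∀ s ∈ Ico a (a + c), (g s = 0 ↔ ∃ i : Fin m, s = t i.castSucc)) :
    ∃ ε : Fin m → ℝ,
      (∀ i, ε i = 1 ∨ ε i = -1) ∧
      (∀ i : Fin m, ∀ s ∈ Ioo (t i.castSucc) (t i.succ), Real.sign (g s) = ε i) ∧
      (∀ i j : Fin m, (i : ℕ) + 1 = (j : ℕ) → ε j = -ε i) ∧
      ∑ i, ε i = 0 := by
  have hzero_iff {s : ℝ} := eq_zero_iff_mem_range_of_periodic hper hm hmono.monotone hrange hlast
    hzeros (s := s)
  have hmem (k : Fin (m + 1)) : t k ∈ Icc (t 0) (t (Fin.last m)) :=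
    ⟨hmono.monotone k.zero_le, hmono.monotone k.le_last⟩
  have hzero (k : Fin (m + 1)) : g (t k) = 0 := (hzero_iff (hmem k)).2 (mem_range_self k)
  have hne (i : Fin m) : ∀ s ∈ Ioo (t i.castSucc) (t i.succ), g s ≠ 0 := fun s hs hgs ↦
    notMem_range_of_mem_Ioo_castSucc_succ hmono hs
      ((hzero_iff ⟨(hmem _).1.trans hs.1.le, hs.2.le.trans (hmem _).2⟩).1 hgs)
  let d (k : Fin (m + 1)) : ℝ := Real.sign (deriv g (t k))
  have hd_succ (i : Fin m) : d i.succ = -d i.castSucc := by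
    simp only [d, real_sign_eq_coe_sign, SignType.coe_neg,
      sign_deriv_right_eq_neg_sign_deriv_left (hmono i.castSucc_lt_succ) hg.continuousOn (hne i)
        (hzero _) (hreg _ (hzero _)) (hzero _) (hreg _ (hzero _))]
  have hd_last : d (Fin.last m) = d 0 := by
    simp only [d, hlast, periodic_deriv hper (t 0)]
  refine ⟨fun i ↦ d i.castSucc, fun i ↦ ?_, fun i s hs ↦ ?_, fun i j hij ↦ ?_, ?_⟩
  · exact (Real.sign_apply_eq_of_ne_zero _ (hreg _ (hzero _))).symm
  · rw [real_sign_eq_coe_sign, sign_eq_sign_deriv_left hg.continuousOn (hne i) (hzero _)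
      (hreg _ (hzero _)) hs, ← real_sign_eq_coe_sign]
  · have hj : j.castSucc = i.succ := Fin.ext hij.symm
    simp only [hj, hd_succ]
  · have htwice := two_nsmul_sum_castSucc_of_alternating hd_succ
    rwa [hd_last, sub_self, smul_eq_zero_iff_right two_ne_zero] at htwice

/-- Lemma 2.8(b): if the `2π`-periodic `C¹` function `g` has `0` as a regular value and its
zeros in `[0, 2π)` are `t₁ < ⋯ < t_m` (with `t_{m+1} = t₁ + 2π`), then on the consecutive
open arcs `(tᵢ, tᵢ₊₁)` the sign of `g` is constant and alternating, and the sum of these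
signs over all `m` arcs is `0`. -/
theorem alternating_signs_sum_zero (g : ℝ → ℝ) (hg : ContDiff ℝ 1 g)
    (hper : Function.Periodic g (2 * π))
    (hreg : ∀ t, g t = 0 → deriv g t ≠ 0)
    (m : ℕ) (hm : 0 < m) (t : Fin (m + 1) → ℝ)
    (hmono : StrictMono t)
    (hrange : ∀ i : Fin m, t i.castSucc ∈ Ico (0 : ℝ) (2 * π))
    (hlast : t (Fin.last m) = t 0 + 2 * π)
    (hzeros : ∀ s ∈ Ico (0 : ℝ) (2 * π), (g s = 0 ↔ ∃ i : Fin m, s = t i.castSucc)) :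
    ∃ ε : Fin m → ℝ,
      (∀ i, ε i = 1 ∨ ε i = -1) ∧
      (∀ i : Fin m, ∀ s ∈ Ioo (t i.castSucc) (t i.succ), Real.sign (g s) = ε i) ∧
      (∀ i j : Fin m, (i : ℕ) + 1 = (j : ℕ) → ε j = -ε i) ∧
      ∑ i, ε i = 0 :=
  alternating_signs_sum_zero_general (a := 0) hg.continuous hper hreg hm hmono
    (by simpa only [zero_add] using hrange) hlast (by simpa only [zero_add] using hzeros)
end

section
/- Let E : S¹ → ℝ² be a continuous rotating vector field, i.e., ⟨JE(x), x⟩ ≠ 0 for all x ∈ S¹. Then ⟨JE(x), x⟩ < 0 for all x ∈ S¹ (equivalently, rind(E) = −1) if and only if there exists a continuous homotopy H : [0,1] × S¹ → ℝ² with H(0,·) = E, H(1,·) = E⁻, and ⟨J H(t,x), x⟩ ≠ 0 for all t ∈ [0,1] and x ∈ S¹, where E⁻(x₁,x₂) = (−x₂, x₁). -/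
/-!
For fixed `x`, the map `v ↦ ⟨Jv, x⟩` is linear and continuous. By the intermediate value theorem a
continuous nowhere-zero path of values keeps its sign, so admissibly homotopic fields have the same
sign at every point; conversely, when the signs agree, so does the sign along the segment joining
`E x` to `F x`, and the straight-line homotopy is admissible. The field `E⁻` is `J` itself, and
`⟨J(Jx), x⟩ = -|x|²` is negative away from the origin.
-/

open Set

/-- Counterclockwise rotation of the plane by `π/2`: `J(a,b) = (-b,a)`. -/
def J (p : ℝ × ℝ) : ℝ × ℝ := (-p.2, p.1)

/-- Euclidean inner product on `ℝ²`. -/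
def dot (p q : ℝ × ℝ) : ℝ := p.1 * q.1 + p.2 * q.2

/-- The unit circle `S¹ ⊆ ℝ²`. -/
def unitCircle : Set (ℝ × ℝ) := {p | p.1 ^ 2 + p.2 ^ 2 = 1}

theorem mul_pos_of_continuousOn_of_forall_ne_zero {X R : Type*} [TopologicalSpace X] [Ring R]
    [LinearOrder R] [IsStrictOrderedRing R] [TopologicalSpace R] [OrderClosedTopology R]
    {s : Set X} (hs : IsPreconnected s) {f : X → R} (hf : ContinuousOn f s)
    (hne : ∀ x ∈ s, f x ≠ 0) {a b : X} (ha : a ∈ s) (hb : b ∈ s) : 0 < f a * f b := by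
  have zero_notMem_image : (0 : R) ∉ f '' s := fun ⟨x, hx, hfx⟩ ↦ hne x hx hfx
  rcases (hne a ha).lt_or_gt with ha_neg | ha_pos <;>
    rcases (hne b hb).lt_or_gt with hb_neg | hb_pos
  · exact mul_pos_of_neg_of_neg ha_neg hb_neg
  · exact absurd (hs.intermediate_value ha hb hf ⟨ha_neg.le, hb_pos.le⟩) zero_notMem_image
  · exact absurd (hs.intermediate_value hb ha hf ⟨hb_neg.le, ha_pos.le⟩) zero_notMem_image
  · exact mul_pos ha_pos hb_pos

theorem lineMap_ne_zero_of_mul_pos {R : Type*} [Ring R] [LinearOrder R] [IsStrictOrderedRing R]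
    {a b t : R} (hab : 0 < a * b) (ht : t ∈ Icc 0 1) : AffineMap.lineMap a b t ≠ 0 := by
  rcases pos_and_pos_or_neg_and_neg_of_mul_pos hab with ⟨ha, hb⟩ | ⟨ha, hb⟩
  · exact ((convex_Ioi (0 : R)).lineMap_mem ha hb ht).ne'
  · exact ((convex_Iio (0 : R)).lineMap_mem ha hb ht).ne

section AdmissibleHomotopy

variable {X V : Type*} [TopologicalSpace X] [TopologicalSpace V] {φ : X → V → ℝ} {s : Set X}
  {E F : X → V}

/-- Admissible homotopy between fields `E` and `F` on `s`: a continuous deformation through fields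
on which the test functions `φ x` do not vanish; rotating planar fields are the case
`φ x v = ⟨Jv, x⟩`. The homotopy is a total function, constrained only on `[0, 1] × s`. -/
def AdmissiblyHomotopicOn (φ : X → V → ℝ) (s : Set X) (E F : X → V) : Prop :=
  ∃ H : ℝ × X → V,
    ContinuousOn H (Icc (0 : ℝ) 1 ×ˢ s) ∧
    (∀ x ∈ s, H (0, x) = E x) ∧
    (∀ x ∈ s, H (1, x) = F x) ∧
    ∀ t ∈ Icc (0 : ℝ) 1, ∀ x ∈ s, φ x (H (t, x)) ≠ 0

theorem AdmissiblyHomotopicOn.mul_pos (hφ : ∀ x ∈ s, Continuous (φ x))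
    (h : AdmissiblyHomotopicOn φ s E F) : ∀ x ∈ s, 0 < φ x (E x) * φ x (F x) := by
  obtain ⟨H, hH, hH_zero, hH_one, hne⟩ := h
  intro x hx
  have path_continuousOn : ContinuousOn (fun t : ℝ ↦ φ x (H (t, x))) (Icc 0 1) :=
    (hφ x hx).comp_continuousOn (hH.comp (by fun_prop) fun t ht ↦ ⟨ht, hx⟩)
  have endpoints_mul_pos : 0 < φ x (H (0, x)) * φ x (H (1, x)) :=
    mul_pos_of_continuousOn_of_forall_ne_zero isPreconnected_Icc path_continuousOn
      (fun t ht ↦ hne t ht x hx) (left_mem_Icc.2 zero_le_one) (right_mem_Icc.2 zero_le_one)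
  rwa [hH_zero x hx, hH_one x hx] at endpoints_mul_pos

variable [AddCommGroup V] [Module ℝ V] [IsTopologicalAddGroup V] [ContinuousSMul ℝ V]

theorem AdmissiblyHomotopicOn.of_mul_pos (hφ : ∀ x ∈ s, IsLinearMap ℝ (φ x))
    (hE : ContinuousOn E s) (hF : ContinuousOn F s) (h : ∀ x ∈ s, 0 < φ x (E x) * φ x (F x)) :
    AdmissiblyHomotopicOn φ s E F := by
  refine ⟨fun p ↦ AffineMap.lineMap (E p.2) (F p.2) p.1, ?_,
    fun x _ ↦ AffineMap.lineMap_apply_zero (E x) (F x),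
    fun x _ ↦ AffineMap.lineMap_apply_one (E x) (F x), fun t ht x hx ↦ ?_⟩
  · have snd_mapsTo : MapsTo Prod.snd (Icc (0 : ℝ) 1 ×ˢ s) s := fun p hp ↦ hp.2
    exact (hE.comp continuousOn_snd snd_mapsTo).lineMap (hF.comp continuousOn_snd snd_mapsTo)
      continuousOn_fst
  · have map_segment : φ x (AffineMap.lineMap (E x) (F x) t) =
        AffineMap.lineMap (φ x (E x)) (φ x (F x)) t :=
      ((hφ x hx).mk' (φ x)).toAffineMap.apply_lineMap (E x) (F x) t
    exact map_segment ▸ lineMap_ne_zero_of_mul_pos (h x hx) ht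

theorem admissiblyHomotopicOn_iff_mul_pos (hφ_linear : ∀ x ∈ s, IsLinearMap ℝ (φ x))
    (hφ_cont : ∀ x ∈ s, Continuous (φ x)) (hE : ContinuousOn E s) (hF : ContinuousOn F s) :
    AdmissiblyHomotopicOn φ s E F ↔ ∀ x ∈ s, 0 < φ x (E x) * φ x (F x) :=
  ⟨AdmissiblyHomotopicOn.mul_pos hφ_cont, AdmissiblyHomotopicOn.of_mul_pos hφ_linear hE hF⟩

end AdmissibleHomotopy

theorem continuous_J : Continuous J := by
  unfold J
  fun_prop

theorem continuous_dot_J (x : ℝ × ℝ) : Continuous fun v ↦ dot (J v) x := by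
  unfold dot J
  fun_prop

theorem isLinearMap_dot_J (x : ℝ × ℝ) : IsLinearMap ℝ fun v ↦ dot (J v) x where
  map_add v w := by
    simp only [dot, J, Prod.fst_add, Prod.snd_add]
    ring
  map_smul c v := by
    simp only [dot, J, Prod.smul_fst, Prod.smul_snd, smul_eq_mul]
    ring

theorem dot_J_J (x y : ℝ × ℝ) : dot (J (J x)) y = -dot x y := by
  simp only [dot, J]
  ring

theorem dot_self_pos {x : ℝ × ℝ} (hx : x ≠ 0) : 0 < dot x x := by
  rcases not_and_or.1 (mt Prod.mk_eq_zero.2 hx) with h | h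
  · exact add_pos_of_pos_of_nonneg (mul_self_pos.2 h) (mul_self_nonneg x.2)
  · exact add_pos_of_nonneg_of_pos (mul_self_nonneg x.1) (mul_self_pos.2 h)

theorem zero_notMem_unitCircle : (0 : ℝ × ℝ) ∉ unitCircle := by
  simp [unitCircle]

theorem rind_neg_one_iff_admissibly_homotopic_to_Eminus_general {s : Set (ℝ × ℝ)} (hs : 0 ∉ s)
    {E : ℝ × ℝ → ℝ × ℝ} (hE : ContinuousOn E s) :
    (∀ x ∈ s, dot (J (E x)) x < 0) ↔ AdmissiblyHomotopicOn (fun x v ↦ dot (J v) x) s E J := by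
  rw [admissiblyHomotopicOn_iff_mul_pos (fun x _ ↦ isLinearMap_dot_J x)
    (fun x _ ↦ continuous_dot_J x) hE continuous_J.continuousOn]
  refine forall₂_congr fun x hx ↦ ?_
  have dot_J_J_self_neg : dot (J (J x)) x < 0 := by
    rw [dot_J_J]
    exact neg_neg_of_pos (dot_self_pos (ne_of_mem_of_not_mem hx hs))
  exact ⟨fun h ↦ mul_pos_of_neg_of_neg h dot_J_J_self_neg,
    fun h ↦ neg_of_mul_pos_left h dot_J_J_self_neg.le⟩

/-- Proposition 2.10(i): a continuous rotating field `E` on `S¹` has `⟨JE(x), x⟩ < 0` on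
all of `S¹` (ring index `-1`) if and only if `E` is admissibly homotopic to
`E⁻(x₁,x₂) = (-x₂, x₁)`. -/
theorem rind_neg_one_iff_admissibly_homotopic_to_Eminus
    (E : ℝ × ℝ → ℝ × ℝ) (hE : ContinuousOn E unitCircle)
    (hrot : ∀ x ∈ unitCircle, dot (J (E x)) x ≠ 0) :
    (∀ x ∈ unitCircle, dot (J (E x)) x < 0) ↔
      ∃ H : ℝ × (ℝ × ℝ) → ℝ × ℝ,
        ContinuousOn H (Icc (0 : ℝ) 1 ×ˢ unitCircle) ∧
        (∀ x ∈ unitCircle, H (0, x) = E x) ∧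
        (∀ x ∈ unitCircle, H (1, x) = (-x.2, x.1)) ∧
        ∀ t ∈ Icc (0 : ℝ) 1, ∀ x ∈ unitCircle, dot (J (H (t, x))) x ≠ 0 :=
  rind_neg_one_iff_admissibly_homotopic_to_Eminus_general zero_notMem_unitCircle hE
end

section
/- Let S¹ = {z ∈ ℂ : |z| = 1} and let E : S¹ → ℂ be continuous with Im(E(z) · conj(z)) ≠ 0 for all z ∈ S¹ (so E(z) ≠ 0 and E(z) is never a real multiple of z). Then E, regarded as a continuous map S¹ → ℂ \ {0}, is homotopic within ℂ \ {0} to the inclusion map z ↦ z. -/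
open Set

/-!
The straight-line homotopy works: a real multiple of `z` pairs to zero with `z` under
`(w, z) ↦ Im (w * conj z)`, so `E z` and `z` are linearly independent over `ℝ` and the segment
joining them misses the origin.
-/

theorem zero_notMem_segment_of_linearIndependent {𝕜 V : Type*} [Ring 𝕜] [PartialOrder 𝕜]
    [Nontrivial 𝕜] [AddCommGroup V] [Module 𝕜 V] {x y : V}
    (h : LinearIndependent 𝕜 ![x, y]) : (0 : V) ∉ segment 𝕜 x y := by
  rintro ⟨a, b, -, -, hab, hzero⟩
  obtain ⟨rfl, rfl⟩ := LinearIndependent.pair_iff.mp h a b hzero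
  simp at hab

theorem linearIndependent_pair_of_im_mul_conj_ne_zero {w z : ℂ}
    (h : (w * (starRingEnd ℂ) z).im ≠ 0) : LinearIndependent ℝ ![w, z] := by
  have hz : z ≠ 0 := by
    rintro rfl
    simp at h
  rw [LinearIndependent.pair_symm_iff, LinearIndependent.pair_iff' hz]
  rintro a rfl
  have hreal : (a • z * (starRingEnd ℂ) z).im = 0 := by
    rw [smul_mul_assoc, Complex.mul_conj, Complex.smul_im, Complex.ofReal_im, smul_zero]
  exact h hreal

theorem rotating_field_homotopic_to_inclusion_general {X V : Type*} [TopologicalSpace X]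
    [AddCommGroup V] [Module ℝ V] [TopologicalSpace V] [IsTopologicalAddGroup V]
    [ContinuousSMul ℝ V] {s : Set X} {f g : X → V} (hf : ContinuousOn f s)
    (hg : ContinuousOn g s) (hfg : ∀ x ∈ s, (0 : V) ∉ segment ℝ (f x) (g x)) :
    ∃ H : ℝ × X → V,
      ContinuousOn H (Icc (0 : ℝ) 1 ×ˢ s) ∧
      (∀ x ∈ s, H (0, x) = f x) ∧
      (∀ x ∈ s, H (1, x) = g x) ∧
      ∀ t ∈ Icc (0 : ℝ) 1, ∀ x ∈ s, H (t, x) ≠ 0 := by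
  have hsnd : MapsTo Prod.snd (Icc (0 : ℝ) 1 ×ˢ s) s := fun _ hp => hp.2
  refine ⟨fun p => AffineMap.lineMap (f p.2) (g p.2) p.1, ?_, ?_, ?_, ?_⟩
  · exact (hf.comp continuousOn_snd hsnd).lineMap (hg.comp continuousOn_snd hsnd) continuousOn_fst
  · exact fun x _ => AffineMap.lineMap_apply_zero (f x) (g x)
  · exact fun x _ => AffineMap.lineMap_apply_one (f x) (g x)
  · exact fun t ht x hx => ne_of_mem_of_not_mem (lineMap_mem_segment ℝ (f x) (g x) ht) (hfg x hx)

/-- Homotopy-theoretic form of Corollary 2.14: a continuous rotating field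
`E : S¹ → ℂ \ {0}` (i.e. `Im(E(z)·conj z) ≠ 0` on the unit circle) is homotopic within
`ℂ \ {0}` to the inclusion `z ↦ z`. -/
theorem rotating_field_homotopic_to_inclusion (E : ℂ → ℂ)
    (hE : ContinuousOn E (Metric.sphere (0 : ℂ) 1))
    (hrot : ∀ z ∈ Metric.sphere (0 : ℂ) 1, (E z * (starRingEnd ℂ) z).im ≠ 0) :
    ∃ H : ℝ × ℂ → ℂ,
      ContinuousOn H (Icc (0 : ℝ) 1 ×ˢ Metric.sphere (0 : ℂ) 1) ∧
      (∀ z ∈ Metric.sphere (0 : ℂ) 1, H (0, z) = E z) ∧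
      (∀ z ∈ Metric.sphere (0 : ℂ) 1, H (1, z) = z) ∧
      ∀ t ∈ Icc (0 : ℝ) 1, ∀ z ∈ Metric.sphere (0 : ℂ) 1, H (t, z) ≠ 0 := by
  exact rotating_field_homotopic_to_inclusion_general hE continuousOn_id fun z hz =>
    zero_notMem_segment_of_linearIndependent
      (linearIndependent_pair_of_im_mul_conj_ne_zero (hrot z hz))
end

section
/- Consider the degenerate dynamical system (x₁² + x₂² − 1)·(dx/dt) = (−x₁, −x₂) on ℝ², i.e., the ODE dx/dt = x/(1 − |x|²) away from the unit circle, whose degeneracy set is the unit circle {|x| = 1}. For every initial condition x(0) = x₀ with |x₀| ∉ {0, 1}, the maximal forward solution is defined on a bounded interval [0, T) with T < ∞, and |x(t)| → 1 as t → T⁻; moreover |x(t)| is strictly increasing in t when 0 < |x₀| < 1 and strictly decreasing when |x₀| > 1. Thus trajectories from both sides reach the degeneracy circle in finite time. -/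
open Set Filter

/-!
Trajectories are radial, and the radius `r` satisfies `(r⁻¹ - r) r' = 1`, so `log r - r ^ 2 / 2`
grows at unit speed. As a function of `r` it is strictly monotone on each side of `r = 1`, where it
has its maximum: inverting it on the side of `‖x₀‖` gives the solution, and the time needed to reach
the ring is the finite gap between the maximum and the initial value.
-/

open scoped Topology

section LeftInverse

variable {α β : Type*}

lemma strictMonoOn_image_of_leftInvOn [LinearOrder α] [Preorder β] {f : α → β} {g : β → α}
    {s : Set α} (hf : StrictMonoOn f s) (hg : LeftInvOn g f s) : StrictMonoOn g (f '' s) := by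
  rintro _ ⟨u, hu, rfl⟩ _ ⟨w, hw, rfl⟩ huw
  rw [hg hu, hg hw]
  exact (hf.lt_iff_lt hu hw).1 huw

lemma continuousOn_image_of_leftInvOn [TopologicalSpace α] [TopologicalSpace β] [T2Space β]
    {f : α → β} {g : β → α} {s : Set α} (hs : IsCompact s) (hf : ContinuousOn f s)
    (hg : LeftInvOn g f s) : ContinuousOn g (f '' s) := by
  refine continuousOn_iff_isClosed.2 fun K hK => ⟨f '' (s ∩ K), ?_, ?_⟩
  · exact ((hs.inter_right hK).image_of_continuousOn (hf.mono inter_subset_left)).isClosed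
  · ext z
    constructor
    · rintro ⟨hzK, u, hu, rfl⟩
      exact ⟨⟨u, ⟨hu, hg hu ▸ hzK⟩, rfl⟩, mem_image_of_mem f hu⟩
    · rintro ⟨⟨u, ⟨hu, huK⟩, rfl⟩, hz⟩
      exact ⟨mem_preimage.2 ((hg hu).symm ▸ huK), hz⟩

lemma exists_inverse_of_strictMonoOn_Icc [ConditionallyCompleteLinearOrder α] [DenselyOrdered α]
    [TopologicalSpace α] [OrderTopology α] [LinearOrder β] [TopologicalSpace β] [OrderTopology β]
    {f : α → β} {a b : α} (hab : a ≤ b) (hmono : StrictMonoOn f (Icc a b))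
    (hf : ContinuousOn f (Icc a b)) :
    ∃ g : β → α, LeftInvOn g f (Icc a b) ∧ RightInvOn g f (Icc (f a) (f b)) ∧
      MapsTo g (Ioo (f a) (f b)) (Ioo a b) ∧ StrictMonoOn g (Icc (f a) (f b)) ∧
      ContinuousOn g (Icc (f a) (f b)) := by
  have : Nonempty α := ⟨a⟩
  have himage : f '' Icc a b = Icc (f a) (f b) := hf.image_Icc_of_monotoneOn hab hmono.monotoneOn
  have hleft : LeftInvOn (Function.invFunOn f (Icc a b)) f (Icc a b) :=
    hmono.injOn.leftInvOn_invFunOn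
  refine ⟨_, hleft, himage ▸ hleft.rightInvOn_image, fun t ht => ?_,
    himage ▸ strictMonoOn_image_of_leftInvOn hmono hleft,
    himage ▸ continuousOn_image_of_leftInvOn isCompact_Icc hf hleft⟩
  obtain ⟨u, hu, rfl⟩ := intermediate_value_Ioo hab hf ht
  exact (hleft (Ioo_subset_Icc_self hu)).symm ▸ hu

end LeftInverse

/-- `y` solves the scalar equation `y' = v y` on `[0, T)`, starts at `r₀` and tends to `r₁` as
`t → T⁻`. As in the theorem, the derivative at `t = 0` is two-sided. -/
structure IsArrivingSolution (v : ℝ → ℝ) (r₀ r₁ T : ℝ) (y : ℝ → ℝ) : Prop where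
  time_pos : 0 < T
  init : y 0 = r₀
  hasDerivAt : ∀ t ∈ Ico 0 T, HasDerivAt y (v (y t)) t
  tendsto : Tendsto y (𝓝[<] T) (𝓝 r₁)

namespace IsArrivingSolution

variable {v y : ℝ → ℝ} {r₀ r₁ T : ℝ}

lemma neg (hy : IsArrivingSolution v r₀ r₁ T y) :
    IsArrivingSolution (fun r => -v (-r)) (-r₀) (-r₁) T (-y) where
  time_pos := hy.time_pos
  init := congrArg Neg.neg hy.init
  hasDerivAt t ht := by simpa only [Pi.neg_apply, neg_neg] using (hy.hasDerivAt t ht).neg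
  tendsto := hy.tendsto.neg

lemma exists_radial_lift {E : Type*} [NormedAddCommGroup E] [NormedSpace ℝ E] {x₀ : E} {c : ℝ → ℝ}
    (hx₀ : ‖x₀‖ ≠ 0) (hy : IsArrivingSolution (fun r => c r * r) ‖x₀‖ r₁ T y)
    (hnonneg : MapsTo y (Ico 0 T) (Ici 0)) :
    ∃ x : ℝ → E, x 0 = x₀ ∧ EqOn y (fun t => ‖x t‖) (Ico 0 T) ∧
      (∀ t ∈ Ico 0 T, HasDerivAt x (c ‖x t‖ • x t) t) ∧
      Tendsto (fun t => ‖x t‖) (𝓝[<] T) (𝓝 r₁) := by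
  have hnorm : EqOn y (fun t => ‖(y t / ‖x₀‖) • x₀‖) (Ico 0 T) := fun t ht => by
    have hyt : 0 ≤ y t := hnonneg ht
    simp only [norm_smul, norm_div, norm_norm, Real.norm_of_nonneg hyt, div_mul_cancel₀ _ hx₀]
  refine ⟨fun t => (y t / ‖x₀‖) • x₀, ?_, hnorm, fun t ht => ?_, ?_⟩
  · simp only [hy.init, div_self hx₀, one_smul]
  · simp only [← hnorm ht, smul_smul, ← mul_div_assoc]
    exact ((hy.hasDerivAt t ht).div_const ‖x₀‖).smul_const x₀
  · exact hy.tendsto.congr' (hnorm.eventuallyEq_of_mem (Ico_mem_nhdsLT hy.time_pos))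

end IsArrivingSolution

section SeparationOfVariables

variable {τ v : ℝ → ℝ} {a b r₀ : ℝ}

lemma exists_isArrivingSolution_of_pos (hr₀ : r₀ ∈ Ioo a b) (hτ₀ : τ r₀ = 0)
    (hτ : ContinuousOn τ (Icc a b)) (hτ' : ∀ r ∈ Ioo a b, HasDerivAt τ (v r)⁻¹ r)
    (hv : ∀ r ∈ Ioo a b, 0 < v r) :
    ∃ y : ℝ → ℝ, IsArrivingSolution v r₀ b (τ b) y ∧ MapsTo y (Ico 0 (τ b)) (Ioo a b) ∧
      StrictMonoOn y (Ico 0 (τ b)) := by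
  have hab : a ≤ b := (hr₀.1.trans hr₀.2).le
  have ha : a ∈ Icc a b := left_mem_Icc.2 hab
  have hb : b ∈ Icc a b := right_mem_Icc.2 hab
  have hmono : StrictMonoOn τ (Icc a b) := by
    refine strictMonoOn_of_deriv_pos (convex_Icc a b) hτ fun r hr => ?_
    rw [interior_Icc] at hr
    exact (hτ' r hr).deriv ▸ inv_pos.2 (hv r hr)
  have hτa : τ a < 0 := hτ₀ ▸ hmono ha (Ioo_subset_Icc_self hr₀) hr₀.1
  have hτb : 0 < τ b := hτ₀ ▸ hmono (Ioo_subset_Icc_self hr₀) hb hr₀.2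
  obtain ⟨y, hy, hτy, hmaps, hymono, hycont⟩ := exists_inverse_of_strictMonoOn_Icc hab hmono hτ
  have hsub : Ico 0 (τ b) ⊆ Ioo (τ a) (τ b) := fun t ht => ⟨hτa.trans_le ht.1, ht.2⟩
  refine ⟨y, ⟨hτb, ?_, fun t ht => ?_, ?_⟩, hmaps.mono_left hsub,
    hymono.mono (hsub.trans Ioo_subset_Icc_self)⟩
  · rw [← hτ₀, hy (Ioo_subset_Icc_self hr₀)]
  · have hyt : y t ∈ Ioo a b := hmaps (hsub ht)
    have hnhds : Icc (τ a) (τ b) ∈ 𝓝 t := Icc_mem_nhds (hsub ht).1 (hsub ht).2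
    simpa only [inv_inv] using (hτ' _ hyt).of_local_left_inverse (hycont.continuousAt hnhds)
      (inv_pos.2 (hv _ hyt)).ne' (mem_of_superset hnhds hτy)
  · have hlim : Tendsto y (𝓝[Icc (τ a) (τ b)] τ b) (𝓝 (y (τ b))) :=
      hycont _ (right_mem_Icc.2 (hτa.trans hτb).le)
    rw [hy hb] at hlim
    exact hlim.mono_left (nhdsWithin_le_iff.2 (Icc_mem_nhdsLT (hτa.trans hτb)))

lemma exists_isArrivingSolution_of_neg (hr₀ : r₀ ∈ Ioo a b) (hτ₀ : τ r₀ = 0)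
    (hτ : ContinuousOn τ (Icc a b)) (hτ' : ∀ r ∈ Ioo a b, HasDerivAt τ (v r)⁻¹ r)
    (hv : ∀ r ∈ Ioo a b, v r < 0) :
    ∃ y : ℝ → ℝ, IsArrivingSolution v r₀ a (τ a) y ∧ MapsTo y (Ico 0 (τ a)) (Ioo a b) ∧
      StrictAntiOn y (Ico 0 (τ a)) := by
  have hneg : ∀ r ∈ Ioo (-b) (-a), -r ∈ Ioo a b := fun r hr =>
    ⟨lt_neg.1 hr.2, neg_lt.1 hr.1⟩
  obtain ⟨z, hz, hzmaps, hzmono⟩ :=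
    exists_isArrivingSolution_of_pos (τ := fun r => τ (-r)) (v := fun r => -v (-r))
      (a := -b) (b := -a) (r₀ := -r₀) ⟨neg_lt_neg hr₀.2, neg_lt_neg hr₀.1⟩
      (by rw [neg_neg, hτ₀])
      (hτ.comp continuousOn_neg fun r hr => ⟨le_neg.1 hr.2, neg_le.1 hr.1⟩)
      (fun r hr => by
        simpa only [inv_neg, mul_neg_one, Function.comp_def] using
          (hτ' _ (hneg r hr)).comp r (hasDerivAt_neg r))
      (fun r hr => neg_pos.2 (hv _ (hneg r hr)))
  simp only [neg_neg] at hz hzmaps hzmono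
  exact ⟨-z, by simpa only [neg_neg] using hz.neg, fun t ht => hneg _ (hzmaps ht), hzmono.neg⟩

end SeparationOfVariables

/-- The signed time that the radial equation `r' = (1 - r ^ 2)⁻¹ * r` takes from radius `r₀` to
radius `r`, for positive radii on the same side of `1`. -/
noncomputable def elapsedTime (r₀ r : ℝ) : ℝ :=
  (Real.log r - r ^ 2 / 2) - (Real.log r₀ - r₀ ^ 2 / 2)

section ElapsedTime

variable {r₀ r : ℝ}

lemma elapsedTime_self (r₀ : ℝ) : elapsedTime r₀ r₀ = 0 :=
  sub_self _

lemma hasDerivAt_elapsedTime (hr : r ≠ 0) :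
    HasDerivAt (elapsedTime r₀) ((1 - r ^ 2)⁻¹ * r)⁻¹ r := by
  have h := ((Real.hasDerivAt_log hr).sub ((hasDerivAt_pow 2 r).div_const 2)).sub_const
    (Real.log r₀ - r₀ ^ 2 / 2)
  refine h.congr_deriv ?_
  rw [mul_inv, inv_inv]
  field_simp
  push_cast
  ring

lemma continuousOn_elapsedTime {a b : ℝ} (ha : 0 < a) : ContinuousOn (elapsedTime r₀) (Icc a b) :=
  fun _ hr => (hasDerivAt_elapsedTime (ha.trans_le hr.1).ne').continuousAt.continuousWithinAt

lemma exists_radius_of_lt_one (hr₀ : 0 < r₀) (hr₁ : r₀ < 1) :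
    ∃ y : ℝ → ℝ, IsArrivingSolution (fun r => (1 - r ^ 2)⁻¹ * r) r₀ 1 (elapsedTime r₀ 1) y ∧
      MapsTo y (Ico 0 (elapsedTime r₀ 1)) (Ici 0) ∧
      StrictMonoOn y (Ico 0 (elapsedTime r₀ 1)) := by
  have hpos : ∀ r ∈ Ioo (r₀ / 2) 1, 0 < r := fun r hr => (half_pos hr₀).trans hr.1
  obtain ⟨y, hy, hmaps, hmono⟩ := exists_isArrivingSolution_of_pos
    (v := fun r => (1 - r ^ 2)⁻¹ * r) ⟨half_lt_self hr₀, hr₁⟩ (elapsedTime_self r₀)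
    (continuousOn_elapsedTime (half_pos hr₀))
    (fun r hr => hasDerivAt_elapsedTime (hpos r hr).ne')
    (fun r hr => mul_pos
      (inv_pos.2 (sub_pos.2 (pow_lt_one₀ (hpos r hr).le hr.2 two_ne_zero))) (hpos r hr))
  exact ⟨y, hy, hmaps.mono_right fun r hr => (hpos r hr).le, hmono⟩

lemma exists_radius_of_one_lt (hr₀ : 1 < r₀) :
    ∃ y : ℝ → ℝ, IsArrivingSolution (fun r => (1 - r ^ 2)⁻¹ * r) r₀ 1 (elapsedTime r₀ 1) y ∧
      MapsTo y (Ico 0 (elapsedTime r₀ 1)) (Ici 0) ∧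
      StrictAntiOn y (Ico 0 (elapsedTime r₀ 1)) := by
  have hpos : ∀ r ∈ Ioo 1 (r₀ + 1), 0 < r := fun r hr => zero_lt_one.trans hr.1
  obtain ⟨y, hy, hmaps, hanti⟩ := exists_isArrivingSolution_of_neg
    (v := fun r => (1 - r ^ 2)⁻¹ * r) ⟨hr₀, lt_add_one r₀⟩ (elapsedTime_self r₀)
    (continuousOn_elapsedTime zero_lt_one)
    (fun r hr => hasDerivAt_elapsedTime (hpos r hr).ne')
    (fun r hr => mul_neg_of_neg_of_pos
      (inv_lt_zero.2 (sub_neg.2 (one_lt_pow₀ hr.1 two_ne_zero))) (hpos r hr))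
  exact ⟨y, hy, hmaps.mono_right fun r hr => (hpos r hr).le, hanti⟩

end ElapsedTime

theorem annihilation_ring_finite_time_general {E : Type*} [NormedAddCommGroup E] [NormedSpace ℝ E]
    (x₀ : E) (h0 : ‖x₀‖ ≠ 0) (h1 : ‖x₀‖ ≠ 1) :
    0 < elapsedTime ‖x₀‖ 1 ∧
      ∃ x : ℝ → E,
        x 0 = x₀ ∧
        (∀ t ∈ Ico 0 (elapsedTime ‖x₀‖ 1), HasDerivAt x ((1 - ‖x t‖ ^ 2)⁻¹ • x t) t) ∧
        Tendsto (fun t => ‖x t‖) (𝓝[<] elapsedTime ‖x₀‖ 1) (𝓝 1) ∧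
        (‖x₀‖ < 1 → StrictMonoOn (fun t => ‖x t‖) (Ico 0 (elapsedTime ‖x₀‖ 1))) ∧
        (1 < ‖x₀‖ → StrictAntiOn (fun t => ‖x t‖) (Ico 0 (elapsedTime ‖x₀‖ 1))) := by
  rcases lt_or_gt_of_ne h1 with hlt | hgt
  · obtain ⟨y, hy, hnonneg, hmono⟩ := exists_radius_of_lt_one ((norm_nonneg x₀).lt_of_ne' h0) hlt
    obtain ⟨x, hx0, hnorm, hderiv, hlim⟩ := hy.exists_radial_lift h0 hnonneg
    exact ⟨hy.time_pos, x, hx0, hderiv, hlim, fun _ => hmono.congr hnorm,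
      fun hgt => absurd hgt hlt.not_gt⟩
  · obtain ⟨y, hy, hnonneg, hanti⟩ := exists_radius_of_one_lt hgt
    obtain ⟨x, hx0, hnorm, hderiv, hlim⟩ := hy.exists_radial_lift h0 hnonneg
    exact ⟨hy.time_pos, x, hx0, hderiv, hlim, fun hlt => absurd hlt hgt.not_gt,
      fun _ => hanti.congr hnorm⟩

/-- Example 2.2(a): for the system `(|x|² - 1)·dx/dt = -x`, i.e. `dx/dt = x/(1 - |x|²)`
away from the unit circle (the degeneracy set), every trajectory starting at `x₀` with
`|x₀| ∉ {0,1}` reaches the degeneracy circle in finite time: the forward solution lives on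
a bounded interval `[0, T)` with `|x(t)| → 1` as `t → T⁻`, `|x(t)|` strictly increasing
when `0 < |x₀| < 1` and strictly decreasing when `|x₀| > 1`. -/
theorem annihilation_ring_finite_time (x₀ : EuclideanSpace ℝ (Fin 2))
    (h0 : ‖x₀‖ ≠ 0) (h1 : ‖x₀‖ ≠ 1) :
    ∃ T : ℝ, 0 < T ∧
      ∃ x : ℝ → EuclideanSpace ℝ (Fin 2),
        x 0 = x₀ ∧
        (∀ t ∈ Ico (0 : ℝ) T, HasDerivAt x ((1 - ‖x t‖ ^ 2)⁻¹ • x t) t) ∧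
        Tendsto (fun t => ‖x t‖) (nhdsWithin T (Iio T)) (nhds 1) ∧
        (‖x₀‖ < 1 → StrictMonoOn (fun t => ‖x t‖) (Ico 0 T)) ∧
        (1 < ‖x₀‖ → StrictAntiOn (fun t => ‖x t‖) (Ico 0 T)) :=
  ⟨elapsedTime ‖x₀‖ 1, annihilation_ring_finite_time_general x₀ h0 h1⟩
end
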